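/- Let x ∈ E with ‖x‖ = 1, let w, v ∈ E, set ν := P(x) w, let c > 0 be a scalar, and let J : E → E be a linear map. Then the pair of equations P(x) v = 0 and -c • (v - ν) + J(P(x) v) = 0 holds if and only if v = 0 and ν = 0. Consequently, the equilibrium points (x, v) of the closed-loop system ẋ = P(x)v, v̇ = -c(v - ν(x)) + J(P(x)v) on the unit sphere are exactly the pairs (x, 0) with ν(x) = 0. -/

import Mathlib

open scoped RealInnerProductSpace

/-- Orthogonal projection onto the tangent space of the unit sphere at `x`:
`P(x) v = v - ⟪x, v⟫ • x`. -/
noncomputable def sproj {F : Type*} [NormedAddCommGroup F] [InnerProductSpace ℝ F]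
    (x v : F) : F :=
  v - ⟪x, v⟫ • x

/-- Claim 3 of Theorem 1: characterization of the equilibrium points of the
closed-loop system `ẋ = P(x)v`, `v̇ = -c(v - ν(x)) + J(P(x)v)` on the unit
sphere: with `ν = P(x)w`, the stationarity equations hold iff `v = 0` and
`ν = 0`. -/
theorem equilibrium_characterization
    (n : ℕ)
    (x w v : EuclideanSpace ℝ (Fin (n+1)))
    (hx : ‖x‖ = 1)
    (c : ℝ) (hc : 0 < c)
    (J : EuclideanSpace ℝ (Fin (n+1)) →ₗ[ℝ] EuclideanSpace ℝ (Fin (n+1))) :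
    (sproj x v = 0 ∧ (-c) • (v - sproj x w) + J (sproj x v) = 0) ↔
      (v = 0 ∧ sproj x w = 0) := by
  constructor
  · rintro ⟨h1, h2⟩
    rw [h1, map_zero, add_zero, smul_eq_zero] at h2
    have h3 : v = sproj x w := by
      rcases h2 with h | h
      · linarith
      · exact sub_eq_zero.mp h
    have h4 : ⟪x, v⟫ = 0 := by
      rw [h3, sproj, inner_sub_right, real_inner_smul_right, real_inner_self_eq_norm_sq, hx]
      ring
    have h5 : v = 0 := by
      rw [sproj, h4, zero_smul, sub_zero] at h1
      exact h1
    exact ⟨h5, h3 ▸ h5⟩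
  · rintro ⟨h1, h2⟩
    have h3 : sproj x v = 0 := by simp [sproj, h1]
    exact ⟨h3, by rw [h3, h2, h1]; simp⟩
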